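/- Every 2×2 integer matrix A with determinant 1 can be written in the form A = M(a_1, ..., a_n) for some n ≥ 1 and some positive integers a_1, ..., a_n. Equivalently, every element of SL(2, ℤ) equals T^{a_n} S T^{a_{n−1}} S ⋯ T^{a_1} S for suitable positive integers a_i, where S = [[0, −1], [1, 0]] and T = [[1, 1], [0, 1]]. -/

import Mathlib

/-!
In `SL(2, ℤ)` put `U = T * S` and `V = T ^ 2 * S`, whose matrices are `elemMat 1` and `elemMat 2`.
The elements `S` and `U` generate `SL(2, ℤ)` and have finite order, so they generate it even as a
monoid. Since `U ^ 3 = -1` and `S⁻¹ = -S`, we have `S = U ^ 3 * S⁻¹ = U ^ 2 * T`, where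
`T = V * U⁻¹ = V * U ^ 5`; hence `S = U ^ 2 * V * U ^ 5`, and `U` and `V` generate `SL(2, ℤ)` as a
monoid. The relation `U ^ 6 = 1` allows any word in `U` and `V` to be taken nonempty.
-/

open Matrix

def elemMat (a : ℤ) : Matrix (Fin 2) (Fin 2) ℤ := !![a, -1; 1, 0]

/-- `M (a₁ :: ... :: aₙ)` is the product `E(aₙ) ⋯ E(a₁)` with the factor for `a₁` rightmost. -/
def M : List ℤ → Matrix (Fin 2) (Fin 2) ℤ
  | [] => 1
  | a :: t => M t * elemMat a

theorem M_append (l₁ l₂ : List ℤ) : M (l₁ ++ l₂) = M l₂ * M l₁ := by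
  induction l₁ with
  | nil => simp [M]
  | cons a t ih => simp [M, ih, Matrix.mul_assoc]

theorem M_replicate (n : ℕ) (a : ℤ) : M (List.replicate n a) = elemMat a ^ n := by
  induction n with
  | zero => rfl
  | succ n ih => rw [List.replicate_succ, M, ih, pow_succ]

theorem exists_M_eq_of_mem_closure {s : Set ℤ} {A : Matrix (Fin 2) (Fin 2) ℤ}
    (hA : A ∈ Submonoid.closure (elemMat '' s)) :
    ∃ l : List ℤ, (∀ x ∈ l, x ∈ s) ∧ M l = A := by
  induction hA using Submonoid.closure_induction_right with
  | one => exact ⟨[], by simp, rfl⟩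
  | mul_right B _ C hC ih =>
    obtain ⟨l, hl, rfl⟩ := ih
    obtain ⟨a, ha, rfl⟩ := hC
    exact ⟨a :: l, List.forall_mem_cons.2 ⟨ha, hl⟩, rfl⟩

section ModularGroup

open ModularGroup
open scoped MatrixGroups

theorem coe_T_zpow_mul_S (a : ℤ) :
    ((T ^ a * S : SL(2, ℤ)) : Matrix (Fin 2) (Fin 2) ℤ) = elemMat a := by
  rw [Matrix.SpecialLinearGroup.coe_mul, coe_T_zpow, coe_S]
  simp [elemMat]

theorem T_mul_S_pow_three : (T * S) ^ 3 = -1 := by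
  decide

theorem T_mul_S_pow_six : (T * S) ^ 6 = 1 := by
  rw [pow_mul (T * S) 3 2, T_mul_S_pow_three, neg_one_sq]

theorem S_pow_four : S ^ 4 = 1 := by
  decide

theorem T_mul_S_word_eq_S : (T * S) ^ 2 * (T ^ 2 * S) * (T * S) ^ 5 = S :=
  calc (T * S) ^ 2 * (T ^ 2 * S) * (T * S) ^ 5
      = (T * S) ^ 3 * S⁻¹ * (T * S) ^ 6 := by simp [pow_succ, mul_assoc]
    _ = S := by rw [T_mul_S_pow_three, T_mul_S_pow_six, S_inv, mul_one, neg_one_mul, neg_neg]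

theorem subgroup_closure_S_T_mul_S : Subgroup.closure {S, T * S} = ⊤ := by
  rw [eq_top_iff, ← SpecialLinearGroup.SL2Z_generators, Subgroup.closure_le, Set.pair_subset_iff]
  have hS : S ∈ Subgroup.closure {S, T * S} := Subgroup.subset_closure (by simp)
  have hTS : T * S ∈ Subgroup.closure {S, T * S} := Subgroup.subset_closure (by simp)
  exact ⟨hS, (Subgroup.mul_mem_cancel_right _ hS).1 hTS⟩

theorem submonoid_closure_S_T_mul_S : Submonoid.closure {S, T * S} = ⊤ := by
  have hfin : ∀ g ∈ ({S, T * S} : Set SL(2, ℤ)), IsOfFinOrder g := by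
    rintro g (rfl | rfl)
    · exact isOfFinOrder_iff_pow_eq_one.2 ⟨4, by norm_num, S_pow_four⟩
    · exact isOfFinOrder_iff_pow_eq_one.2 ⟨6, by norm_num, T_mul_S_pow_six⟩
  rw [← Subgroup.closure_toSubmonoid_of_isOfFinOrder hfin, subgroup_closure_S_T_mul_S,
    Subgroup.top_toSubmonoid]

theorem submonoid_closure_T_mul_S_T_sq_mul_S : Submonoid.closure {T * S, T ^ 2 * S} = ⊤ := by
  rw [eq_top_iff, ← submonoid_closure_S_T_mul_S, Submonoid.closure_le, Set.pair_subset_iff]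
  have hU : T * S ∈ Submonoid.closure {T * S, T ^ 2 * S} := Submonoid.subset_closure (by simp)
  have hV : T ^ 2 * S ∈ Submonoid.closure {T * S, T ^ 2 * S} := Submonoid.subset_closure (by simp)
  have hS : S ∈ Submonoid.closure {T * S, T ^ 2 * S} := by
    simpa only [T_mul_S_word_eq_S] using mul_mem (mul_mem (pow_mem hU 2) hV) (pow_mem hU 5)
  exact ⟨hS, hU⟩

theorem elemMat_one_pow_six : elemMat 1 ^ 6 = 1 := by
  rw [← coe_T_zpow_mul_S, zpow_one, ← Matrix.SpecialLinearGroup.coe_pow, T_mul_S_pow_six,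
    Matrix.SpecialLinearGroup.coe_one]

theorem coe_mem_closure_elemMat (g : SL(2, ℤ)) :
    (g : Matrix (Fin 2) (Fin 2) ℤ) ∈ Submonoid.closure (elemMat '' {1, 2}) := by
  have himage : elemMat '' {1, 2} = SpecialLinearGroup.coeMonoidHom '' {T * S, T ^ 2 * S} := by
    simp only [Set.image_pair, SpecialLinearGroup.coeMonoidHom_apply, ← coe_T_zpow_mul_S,
      zpow_ofNat, pow_one]
  rw [himage, ← MonoidHom.map_mclosure, submonoid_closure_T_mul_S_T_sq_mul_S]
  exact Submonoid.mem_map_of_mem _ (Submonoid.mem_top g)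

end ModularGroup

theorem surjective_M_general (A : Matrix (Fin 2) (Fin 2) ℤ) (hA : A.det = 1) :
    ∃ l : List ℤ, l ≠ [] ∧ (∀ x ∈ l, x = 1 ∨ x = 2) ∧ M l = A := by
  obtain ⟨l, hl, hlA⟩ := exists_M_eq_of_mem_closure (coe_mem_closure_elemMat ⟨A, hA⟩)
  refine ⟨List.replicate 6 1 ++ l, by simp, ?_, ?_⟩
  · exact List.forall_mem_append.2 ⟨fun x hx ↦ .inl (List.eq_of_mem_replicate hx), hl⟩
  · rw [M_append, M_replicate, elemMat_one_pow_six, mul_one, hlA]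

/-- Every element of `SL(2,ℤ)` can be written in the form `M(a₁,...,aₙ)` with all `aᵢ` positive. -/
theorem surjective_M (A : Matrix (Fin 2) (Fin 2) ℤ) (hA : A.det = 1) :
    ∃ l : List ℤ, l ≠ [] ∧ (∀ x ∈ l, 0 < x) ∧ M l = A := by
  obtain ⟨l, hl, h12, hlA⟩ := surjective_M_general A hA
  exact ⟨l, hl, fun x hx ↦ by have := h12 x hx; omega, hlA⟩
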